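/- arXiv:2408.17153 — 4 statements merged into one kernel-verified Lean document; each statement's English description precedes it below -/
import Mathlib

section
/- Let N ≥ 2 and let {C₁, …, C_K} be a partition of {1, …, N} into K nonempty clusters with n_k = |C_k| and n_k^⋆ = n_k(n_k − 1)/2. Let D be a symmetric N × N real matrix with D_{ij} > 0 for all i ≠ j, and let δ₁, δ₂, μ, β, ζ, γ be positive reals. Then the iterated integral over (λ₁, …, λ_K) ∈ (0,∞)^K and (θ_{kt})_{1 ≤ k < t ≤ K} ∈ (0,∞)^{K(K−1)/2} of [∏_{k=1}^K ∏_{i<j, i,j ∈ C_k} (λ_k^{δ₁}/Γ(δ₁)) D_{ij}^{δ₁−1} e^{−λ_k D_{ij}}] · [∏_{k<t} ∏_{i ∈ C_k, j ∈ C_t} (θ_{kt}^{δ₂}/Γ(δ₂)) D_{ij}^{δ₂−1} e^{−θ_{kt} D_{ij}}] · [∏_{k=1}^K (β^μ/Γ(μ)) λ_k^{μ−1} e^{−β λ_k}] · [∏_{k<t} (γ^ζ/Γ(ζ)) θ_{kt}^{ζ−1} e^{−γ θ_{kt}}] equals ∏_{k=1}^K L_k^{(1)} · ∏_{k<t} L_{kt}^{(2)},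 where L_k^{(1)} = Γ(δ₁)^{−n_k^⋆} (Γ(μ + n_k^⋆ δ₁)/Γ(μ)) β^μ (∏_{i<j ∈ C_k} D_{ij})^{δ₁−1} (β + ∑_{i<j ∈ C_k} D_{ij})^{−μ − δ₁ n_k^⋆} and L_{kt}^{(2)} = Γ(δ₂)^{−n_k n_t} (Γ(ζ + n_k n_t δ₂)/Γ(ζ)) γ^ζ (∏_{i ∈ C_k, j ∈ C_t} D_{ij})^{δ₂−1} (γ + ∑_{i ∈ C_k, j ∈ C_t} D_{ij})^{−ζ − δ₂ n_k n_t}. -/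
open MeasureTheory Real Finset

lemma bdc_core {ι : Type*} (s : Finset ι) (d : ι → ℝ) (hd : ∀ e ∈ s, 0 < d e)
    (δ m b : ℝ) (hδ : 0 < δ) (hm : 0 < m) (hb : 0 < b) :
    (∫ x in Set.Ioi (0 : ℝ),
      (∏ e ∈ s, (x ^ δ / Real.Gamma δ) * d e ^ (δ - 1) * Real.exp (-(x * d e))) *
      ((b ^ m / Real.Gamma m) * x ^ (m - 1) * Real.exp (-(b * x)))) =
    Real.Gamma δ ^ (-(s.card : ℝ)) * (Real.Gamma (m + (s.card : ℝ) * δ) / Real.Gamma m) *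
      b ^ m * (∏ e ∈ s, d e) ^ (δ - 1) * (b + ∑ e ∈ s, d e) ^ (-m - δ * (s.card : ℝ)) := by
  have hG : 0 < Real.Gamma δ := Real.Gamma_pos_of_pos hδ
  have hS : 0 < b + ∑ e ∈ s, d e :=
    add_pos_of_pos_of_nonneg hb (Finset.sum_nonneg fun e he => (hd e he).le)
  have ha : 0 < m + (s.card : ℝ) * δ := by positivity
  have h1 : ∀ x ∈ Set.Ioi (0 : ℝ),
      (∏ e ∈ s, (x ^ δ / Real.Gamma δ) * d e ^ (δ - 1) * Real.exp (-(x * d e))) *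
      ((b ^ m / Real.Gamma m) * x ^ (m - 1) * Real.exp (-(b * x))) =
      (Real.Gamma δ ^ (-(s.card : ℝ)) * (∏ e ∈ s, d e) ^ (δ - 1) * (b ^ m / Real.Gamma m)) *
      (x ^ (m + (s.card : ℝ) * δ - 1) * Real.exp (-((b + ∑ e ∈ s, d e) * x))) := by
    intro x hx
    have hx : 0 < x := hx
    rw [Finset.prod_mul_distrib, Finset.prod_mul_distrib, Finset.prod_const,
      ← Real.exp_sum, Real.finsetProd_rpow s d (fun e he => (hd e he).le),
      Real.rpow_neg hG.le, Real.rpow_natCast, div_pow, ← Real.rpow_natCast (x ^ δ),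
      ← Real.rpow_mul hx.le]
    have e1 : x ^ (m + (s.card : ℝ) * δ - 1) = x ^ (δ * (s.card : ℝ)) * x ^ (m - 1) := by
      rw [← Real.rpow_add hx]; congr 1; ring
    have e2 : Real.exp (-((b + ∑ e ∈ s, d e) * x)) =
        Real.exp (∑ e ∈ s, -(x * d e)) * Real.exp (-(b * x)) := by
      rw [← Real.exp_add, Finset.sum_neg_distrib, ← Finset.mul_sum]; congr 1; ring
    rw [e1, e2]
    ring
  rw [setIntegral_congr_fun measurableSet_Ioi h1, integral_const_mul,
    Real.integral_rpow_mul_exp_neg_mul_Ioi ha hS]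
  have e3 : (1 / (b + ∑ e ∈ s, d e)) ^ (m + (s.card : ℝ) * δ) =
      (b + ∑ e ∈ s, d e) ^ (-m - δ * (s.card : ℝ)) := by
    rw [one_div, Real.inv_rpow hS.le, ← Real.rpow_neg hS.le]; congr 1; ring
  rw [e3]
  ring

lemma bdc_card {α : Type*} [LinearOrder α] (s : Finset α) :
    (s.sigma fun i => s.filter (fun j => i < j)).card = s.card * (s.card - 1) / 2 := by
  rw [← Nat.choose_two_right, Finset.card_sigma]
  induction s using Finset.induction_on_max with
  | empty => simp
  | insert a s ha ih =>
    have hn : a ∉ s := fun h => lt_irrefl _ (ha a h)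
    rw [Finset.sum_insert hn, Finset.card_insert_of_notMem hn, Nat.choose_succ_succ' s.card 1, ← ih]
    have h0 : (insert a s).filter (fun j => a < j) = ∅ := by
      ext j
      simp only [Finset.mem_filter, Finset.mem_insert, Finset.notMem_empty, iff_false]
      rintro ⟨rfl | h, h'⟩
      · exact lt_irrefl _ h'
      · exact lt_asymm h' (ha j h)
    have h1 : ∀ i ∈ s, ((insert a s).filter (fun j => i < j)).card
        = 1 + (s.filter (fun j => i < j)).card := by
      intro i hi
      rw [Finset.filter_insert, if_pos (ha i hi), Finset.card_insert_of_notMem (by simp [hn]),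
        add_comm]
    rw [h0, Finset.sum_congr rfl h1, Finset.sum_add_distrib]
    simp

lemma bdc_pi {ι : Type*} [Fintype ι] (f : ι → ℝ → ℝ) :
    ∫ x in Set.univ.pi (fun _ : ι => Set.Ioi (0 : ℝ)), ∏ i, f i (x i) =
      ∏ i, ∫ x in Set.Ioi (0 : ℝ), f i x := by
  rw [volume_pi, Measure.restrict_pi_pi]
  exact integral_fintype_prod_eq_prod f

/-- Closed form of the marginal (rates integrated out) cohesion–repulsion
Bayesian distance clustering likelihood, for a partition `C₁, …, C_K` of `{1,…,N}`. -/
theorem bdc_marginal_likelihood (N K : ℕ) (hN : 2 ≤ N) (hK : 0 < K)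
    (C : Fin K → Finset (Fin N))
    (hne : ∀ k, (C k).Nonempty)
    (hdisj : ∀ k t : Fin K, k ≠ t → Disjoint (C k) (C t))
    (hcover : Finset.univ.biUnion C = (Finset.univ : Finset (Fin N)))
    (D : Fin N → Fin N → ℝ)
    (hsymm : ∀ i j, D i j = D j i)
    (hpos : ∀ i j, i ≠ j → 0 < D i j)
    (δ₁ δ₂ μ β ζ γ₀ : ℝ)
    (hδ₁ : 0 < δ₁) (hδ₂ : 0 < δ₂) (hμ : 0 < μ) (hβ : 0 < β) (hζ : 0 < ζ) (hγ₀ : 0 < γ₀) :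
    (∫ lam in Set.univ.pi (fun _ : Fin K => Set.Ioi (0 : ℝ)),
      ∫ th in Set.univ.pi (fun _ : {p : Fin K × Fin K // p.1 < p.2} => Set.Ioi (0 : ℝ)),
        (∏ k : Fin K, ∏ i ∈ C k, ∏ j ∈ (C k).filter (fun j => i < j),
            (lam k ^ δ₁ / Real.Gamma δ₁) * D i j ^ (δ₁ - 1) * Real.exp (-(lam k * D i j))) *
        (∏ p : {p : Fin K × Fin K // p.1 < p.2}, ∏ i ∈ C p.1.1, ∏ j ∈ C p.1.2,
            (th p ^ δ₂ / Real.Gamma δ₂) * D i j ^ (δ₂ - 1) * Real.exp (-(th p * D i j))) *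
        (∏ k : Fin K, (β ^ μ / Real.Gamma μ) * lam k ^ (μ - 1) * Real.exp (-(β * lam k))) *
        (∏ p : {p : Fin K × Fin K // p.1 < p.2},
            (γ₀ ^ ζ / Real.Gamma ζ) * th p ^ (ζ - 1) * Real.exp (-(γ₀ * th p))))
    =
    (∏ k : Fin K,
        Real.Gamma δ₁ ^ (-((((C k).card * ((C k).card - 1) / 2 : ℕ) : ℝ))) *
          (Real.Gamma (μ + (((C k).card * ((C k).card - 1) / 2 : ℕ) : ℝ) * δ₁) /
            Real.Gamma μ) *
          β ^ μ *
          (∏ i ∈ C k, ∏ j ∈ (C k).filter (fun j => i < j), D i j) ^ (δ₁ - 1) *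
          (β + ∑ i ∈ C k, ∑ j ∈ (C k).filter (fun j => i < j), D i j) ^
            (-μ - δ₁ * (((C k).card * ((C k).card - 1) / 2 : ℕ) : ℝ))) *
    (∏ p : {p : Fin K × Fin K // p.1 < p.2},
        Real.Gamma δ₂ ^ (-((((C p.1.1).card * (C p.1.2).card : ℕ) : ℝ))) *
          (Real.Gamma (ζ + (((C p.1.1).card * (C p.1.2).card : ℕ) : ℝ) * δ₂) /
            Real.Gamma ζ) *
          γ₀ ^ ζ *
          (∏ i ∈ C p.1.1, ∏ j ∈ C p.1.2, D i j) ^ (δ₂ - 1) *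
          (γ₀ + ∑ i ∈ C p.1.1, ∑ j ∈ C p.1.2, D i j) ^
            (-ζ - δ₂ * (((C p.1.1).card * (C p.1.2).card : ℕ) : ℝ))) := by
  have hA : ∀ k : Fin K, ∀ x : ℝ, _ := fun k x => Finset.prod_sigma' (C k)
    (fun i => (C k).filter (fun j => i < j)) (fun i j =>
      (x ^ δ₁ / Real.Gamma δ₁) * D i j ^ (δ₁ - 1) * Real.exp (-(x * D i j)))
  have hB : ∀ p : {p : Fin K × Fin K // p.1 < p.2}, ∀ x : ℝ, _ := fun p x =>
    Finset.prod_sigma' (C p.1.1) (fun _ => C p.1.2) (fun i j =>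
      (x ^ δ₂ / Real.Gamma δ₂) * D i j ^ (δ₂ - 1) * Real.exp (-(x * D i j)))
  have key : ∀ (a b c d : ℝ), a * b * c * d = (a * c) * (b * d) := fun a b c d => by ring
  simp_rw [key, ← Finset.prod_mul_distrib, integral_const_mul, integral_mul_const]
  rw [bdc_pi (fun k x => (∏ i ∈ C k, ∏ j ∈ (C k).filter (fun j => i < j),
            (x ^ δ₁ / Real.Gamma δ₁) * D i j ^ (δ₁ - 1) * Real.exp (-(x * D i j))) *
            ((β ^ μ / Real.Gamma μ) * x ^ (μ - 1) * Real.exp (-(β * x)))),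
    bdc_pi (fun (p : {p : Fin K × Fin K // p.1 < p.2}) x => (∏ i ∈ C p.1.1, ∏ j ∈ C p.1.2,
            (x ^ δ₂ / Real.Gamma δ₂) * D i j ^ (δ₂ - 1) * Real.exp (-(x * D i j))) *
            ((γ₀ ^ ζ / Real.Gamma ζ) * x ^ (ζ - 1) * Real.exp (-(γ₀ * x))))]
  congr 1
  · refine Finset.prod_congr rfl fun k _ => ?_
    simp_rw [hA]
    rw [bdc_core _ (fun e : (_ : Fin N) × Fin N => D e.1 e.2) _ δ₁ μ β hδ₁ hμ hβ, bdc_card,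
      Finset.prod_sigma, Finset.sum_sigma]
    · ring
    intro e he
    simp only [Finset.mem_sigma, Finset.mem_filter] at he
    exact hpos _ _ he.2.2.ne
  · refine Finset.prod_congr rfl fun p _ => ?_
    simp_rw [hB]
    rw [bdc_core _ (fun e : (_ : Fin N) × Fin N => D e.1 e.2) _ δ₂ ζ γ₀ hδ₂ hζ hγ₀,
      Finset.card_sigma, Finset.sum_const, smul_eq_mul,
      Finset.prod_sigma, Finset.sum_sigma]
    · ring
    intro e he
    simp only [Finset.mem_sigma] at he
    exact hpos _ _ (fun h => Finset.disjoint_left.1 (hdisj _ _ p.2.ne) he.1 (h ▸ he.2))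
end

section
/- Let N ≥ 1, let D be a symmetric N × N real matrix with D_{ii} = 0 and D_{ij} > 0 for i ≠ j, let γ ⊆ {1, …, N} be a nonempty medoid set such that for every j the minimizer of D_{lj} over l ∈ γ is unique, and let σ be a permutation of {1, …, N}. Define D⋆ by D⋆_{ij} = D_{σ(i) σ(j)} and γ⋆ = σ^{−1}(γ). Then for any functions f : ℝ × ℝ → ℝ and g : ℝ → ℝ and any family of real parameters (λ_i)_{i ∈ γ}, the medoid-based linear likelihood is invariant: ∏_{i ∈ γ⋆} ∏_{j ∈ C_i(D⋆, γ⋆) \ {i}} f(D⋆_{ij}, λ_{σ(i)}) · ∏_{i, j ∈ γ⋆, i ≠ j} g(D⋆_{ij}) = ∏_{i ∈ γ} ∏_{j ∈ C_i(D, γ) \ {i}} f(D_{ij}, λ_i) · ∏_{i, j ∈ γ, i ≠ j} g(D_{ij}). -/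
open Finset

/-- The Voronoi cluster (as a `Finset`) of medoid `i` in the medoid set `γ` for distance
matrix `D`: all objects `j` whose minimizer of `D l j` over `l ∈ γ` is `i`. -/
noncomputable def voronoiClusterF {N : ℕ} (D : Fin N → Fin N → ℝ) (γ : Finset (Fin N)) (i : Fin N) :
    Finset (Fin N) :=
  Finset.univ.filter (fun j => i ∈ γ ∧ ∀ l ∈ γ, D i j ≤ D l j)

/-- Exchangeability of the medoid-based "linear" likelihood: permuting the objects by `σ`
(so `D⋆ i j = D (σ i) (σ j)`, `γ⋆ = σ⁻¹(γ)`) leaves the cohesion–repulsion product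
unchanged. -/
theorem bdc_linear_likelihood_exchangeable (N : ℕ) (hN : 1 ≤ N)
    (D : Fin N → Fin N → ℝ)
    (hsymm : ∀ i j, D i j = D j i)
    (hdiag : ∀ i, D i i = 0) (hpos : ∀ i j, i ≠ j → 0 < D i j)
    (γ : Finset (Fin N)) (hγ : γ.Nonempty)
    (huniq : ∀ j, ∃! i, i ∈ γ ∧ ∀ l ∈ γ, D i j ≤ D l j)
    (σ : Equiv.Perm (Fin N))
    (f : ℝ × ℝ → ℝ) (g : ℝ → ℝ) (lam : Fin N → ℝ) :
    (∏ i ∈ γ.image σ.symm,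
        ∏ j ∈ (voronoiClusterF (fun a b => D (σ a) (σ b)) (γ.image σ.symm) i).erase i,
          f (D (σ i) (σ j), lam (σ i))) *
    (∏ i ∈ γ.image σ.symm, ∏ j ∈ (γ.image σ.symm).erase i, g (D (σ i) (σ j)))
    =
    (∏ i ∈ γ, ∏ j ∈ (voronoiClusterF D γ i).erase i, f (D i j, lam i)) *
    (∏ i ∈ γ, ∏ j ∈ γ.erase i, g (D i j)) := by
  have key : ∀ (F : Fin N → ℝ) (s t : Finset (Fin N)), (∀ a, a ∈ s ↔ σ a ∈ t) →
      ∏ a ∈ s, F (σ a) = ∏ b ∈ t, F b := by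
    intro F s t h
    exact Finset.prod_equiv σ h (fun _ _ => rfl)
  have hmem : ∀ a, a ∈ γ.image σ.symm ↔ σ a ∈ γ := by
    intro a
    simp only [Finset.mem_image]
    constructor
    · rintro ⟨b, hb, rfl⟩
      simpa using hb
    · intro h
      exact ⟨σ a, h, by simp⟩
  congr 1
  · refine Finset.prod_equiv σ hmem (fun i _ => ?_)
    refine key (fun b => f (D (σ i) b, lam (σ i))) _ _ (fun a => ?_)
    simp only [Finset.mem_erase, voronoiClusterF, Finset.mem_filter, Finset.mem_univ, true_and,
      hmem, ne_eq, EmbeddingLike.apply_eq_iff_eq]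
    refine and_congr_right fun _ => and_congr_right fun _ => ?_
    constructor
    · intro h l hl
      simpa using h (σ.symm l) (by simpa using hl)
    · intro h l hl
      exact h (σ l) hl
  · refine Finset.prod_equiv σ hmem (fun i _ => ?_)
    refine key (fun b => g (D (σ i) b)) _ _ (fun a => ?_)
    simp only [Finset.mem_erase, hmem, ne_eq, EmbeddingLike.apply_eq_iff_eq]
end

section
/- Let N ≥ 3, let 1 ≤ K ≤ N, let a > 0, and let D be an N × N real matrix with D_{ii} = 0 for all i, D_{1j} = D_{j1} = a for all j ≠ 1, and D_{ij} > a for all distinct i, j both different from 1. Let γ ⊆ {1, …, N} be any medoid set with 1 ∈ γ and |γ| = K. Then the Voronoi tessellation satisfies C_1(D, γ) = {1} ∪ ({1, …, N} \ γ) and C_l(D, γ) = {l} for every l ∈ γ with l ≠ 1; consequently the size of the largest cluster equals N − K + 1. -/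
open Finset

/-- The counterexample in the proof of Proposition 1 (failure of microclustering): if object
`1` is at distance `a` from everyone and all other pairwise distances exceed `a`, then for any
medoid set `γ ∋ 1` of size `K` the cluster of `1` is `{1} ∪ ([N] \ γ)`, all other medoids are
singleton clusters, and the largest cluster has size `N − K + 1`. -/
theorem voronoi_no_microclustering (N K : ℕ) (hN : 3 ≤ N) (hK1 : 1 ≤ K) (hKN : K ≤ N)
    (a : ℝ) (ha : 0 < a)
    (D : Fin N → Fin N → ℝ)
    (hdiag : ∀ i, D i i = 0)
    (hfirst : ∀ j : Fin N, j ≠ ⟨0, by omega⟩ →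
      D ⟨0, by omega⟩ j = a ∧ D j ⟨0, by omega⟩ = a)
    (hrest : ∀ i j : Fin N, i ≠ j → i ≠ ⟨0, by omega⟩ → j ≠ ⟨0, by omega⟩ → a < D i j)
    (γ : Finset (Fin N)) (h0γ : (⟨0, by omega⟩ : Fin N) ∈ γ) (hcard : γ.card = K) :
    voronoiClusterF D γ ⟨0, by omega⟩
        = insert (⟨0, by omega⟩ : Fin N) (Finset.univ \ γ) ∧
    (∀ l ∈ γ, l ≠ (⟨0, by omega⟩ : Fin N) → voronoiClusterF D γ l = {l}) ∧
    γ.sup (fun i => (voronoiClusterF D γ i).card) = N - K + 1 := by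
  generalize hz : (⟨0, by omega⟩ : Fin N) = z at *
  have h1 : voronoiClusterF D γ z = insert z (Finset.univ \ γ) := by
    ext j
    simp only [voronoiClusterF, Finset.mem_filter, Finset.mem_univ, true_and,
      Finset.mem_insert, Finset.mem_sdiff]
    constructor
    · rintro ⟨-, h⟩
      by_cases hj : j = z
      · exact Or.inl hj
      · refine Or.inr fun hjγ => ?_
        have h2 := h j hjγ
        rw [hdiag, (hfirst j hj).1] at h2
        linarith
    · intro h
      refine ⟨h0γ, fun l hl => ?_⟩
      by_cases hlz : l = z
      · rw [hlz]
      by_cases hj : j = z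
      · rw [hj, hdiag, (hfirst l hlz).2]
        exact ha.le
      · have hjγ : j ∉ γ := h.resolve_left hj
        have hne : l ≠ j := fun e => hjγ (e ▸ hl)
        rw [(hfirst j hj).1]
        exact (hrest l j hne hlz hj).le
  have h2 : ∀ l ∈ γ, l ≠ z → voronoiClusterF D γ l = {l} := by
    intro l hl hlz
    ext j
    simp only [voronoiClusterF, Finset.mem_filter, Finset.mem_univ, true_and,
      Finset.mem_singleton]
    constructor
    · rintro ⟨-, h⟩
      by_contra hne
      have h3 := h z h0γ
      by_cases hj : j = z
      · rw [hj, hdiag, (hfirst l hlz).2] at h3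
        linarith
      · rw [(hfirst j hj).1] at h3
        have := hrest l j (Ne.symm hne) hlz hj
        linarith
    · rintro rfl
      refine ⟨hl, fun m hm => ?_⟩
      rw [hdiag]
      by_cases hmj : m = j
      · rw [hmj, hdiag]
      by_cases hmz : m = z
      · rw [hmz, (hfirst j hlz).1]
        exact ha.le
      · exact (ha.trans (hrest m j hmj hmz hlz)).le
  have h3 : (voronoiClusterF D γ z).card = N - K + 1 := by
    rw [h1, Finset.card_insert_of_notMem (by simp [h0γ]), Finset.card_univ_diff, hcard,
      Fintype.card_fin]
  refine ⟨h1, h2, le_antisymm (Finset.sup_le fun i hi => ?_) ?_⟩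
  · by_cases hiz : i = z
    · rw [hiz, h3]
    · rw [h2 i hi hiz, Finset.card_singleton]
      omega
  · rw [← h3]
    exact Finset.le_sup (f := fun i => (voronoiClusterF D γ i).card) h0γ
end

section
/- Let N ≥ 1, let D be an N × N real matrix with D_{ii} = 0 and D_{ij} > 0 for i ≠ j, let γ ⊆ {1, …, N} be a nonempty medoid set with |γ| = K such that for every j the minimizer of D_{lj} over l ∈ γ is unique, and let δ₁, δ₂, μ, β, θ be positive reals. Write n_i^⋆ = |C_i(D, γ)| − 1 for i ∈ γ. Then the iterated integral over (λ_i)_{i ∈ γ} ∈ (0, ∞)^K of [∏_{i ∈ γ} ∏_{j ∈ C_i(D,γ) \ {i}} (λ_i^{δ₁}/Γ(δ₁)) D_{ij}^{δ₁−1} e^{−λ_i D_{ij}}] · [∏_{i ∈ γ} (β^μ/Γ(μ)) λ_i^{μ−1} e^{−β λ_i}] · [∏_{i, j ∈ γ, i < j} (θ^{δ₂}/Γ(δ₂)) D_{ij}^{δ₂−1} e^{−θ D_{ij}}] equals ∏_{i ∈ γ} L_i^{(1)} · ∏_{i < j ∈ γ} (θ^{δ₂}/Γ(δ₂)) D_{ij}^{δ₂−1}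 e^{−θ D_{ij}}, where L_i^{(1)} = Γ(δ₁)^{−n_i^⋆} (Γ(μ + n_i^⋆ δ₁)/Γ(μ)) β^μ (∏_{j ∈ C_i(D,γ)\{i}} D_{ij})^{δ₁−1} (β + ∑_{j ∈ C_i(D,γ)\{i}} D_{ij})^{−μ − δ₁ n_i^⋆}. -/
open MeasureTheory Real Finset

theorem bdc_aux {ι : Type*} (s : Finset ι) (d : ι → ℝ) (hd : ∀ j ∈ s, 0 < d j)
    (δ μ β : ℝ) (hδ : 0 < δ) (hμ : 0 < μ) (hβ : 0 < β) :
    (∫ x in Set.Ioi (0 : ℝ), (∏ j ∈ s, (x ^ δ / Real.Gamma δ) * d j ^ (δ - 1) *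
            Real.exp (-(x * d j))) * ((β ^ μ / Real.Gamma μ) * x ^ (μ - 1) *
          Real.exp (-(β * x)))) =
    Real.Gamma δ ^ (-(s.card : ℝ)) * (Real.Gamma (μ + (s.card : ℝ) * δ) / Real.Gamma μ) *
      β ^ μ * (∏ j ∈ s, d j) ^ (δ - 1) * (β + ∑ j ∈ s, d j) ^ (-μ - δ * (s.card : ℝ)) := by
  have hS : 0 < β + ∑ j ∈ s, d j :=
    add_pos_of_pos_of_nonneg hβ (Finset.sum_nonneg fun j hj => (hd j hj).le)
  have ha : 0 < μ + (s.card : ℝ) * δ := by positivity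
  have key : ∀ x ∈ Set.Ioi (0 : ℝ), (∏ j ∈ s, (x ^ δ / Real.Gamma δ) * d j ^ (δ - 1) *
            Real.exp (-(x * d j))) * ((β ^ μ / Real.Gamma μ) * x ^ (μ - 1) *
          Real.exp (-(β * x))) =
      (Real.Gamma δ ^ (-(s.card : ℝ)) * (β ^ μ / Real.Gamma μ) * (∏ j ∈ s, d j) ^ (δ - 1)) *
      (x ^ ((μ + (s.card : ℝ) * δ) - 1) * Real.exp (-((β + ∑ j ∈ s, d j) * x))) := by
    intro x hx
    have hx : 0 < x := hx
    have e1 : x ^ ((μ + (s.card : ℝ) * δ) - 1) = (x ^ δ) ^ s.card * x ^ (μ - 1) := by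
      rw [← Real.rpow_natCast, ← Real.rpow_mul hx.le, ← Real.rpow_add hx]
      congr 1; ring
    have e2 : Real.exp (-((β + ∑ j ∈ s, d j) * x)) =
        (∏ j ∈ s, Real.exp (-(x * d j))) * Real.exp (-(β * x)) := by
      rw [← Real.exp_sum, ← Real.exp_add, Finset.sum_neg_distrib, ← Finset.mul_sum]
      congr 1; ring
    rw [Finset.prod_mul_distrib, Finset.prod_mul_distrib, Finset.prod_const, e1, e2,
      Real.finsetProd_rpow _ _ (fun j hj => (hd j hj).le),
      Real.rpow_neg (Real.Gamma_pos_of_pos hδ).le, Real.rpow_natCast, div_pow]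
    ring
  rw [setIntegral_congr_fun measurableSet_Ioi key, integral_const_mul,
    Real.integral_rpow_mul_exp_neg_mul_Ioi ha hS, one_div, Real.inv_rpow hS.le,
    ← Real.rpow_neg hS.le, show -(μ + (s.card : ℝ) * δ) = -μ - δ * (s.card : ℝ) by ring]
  ring

/-- Closed form of the medoid-based "linear" Bayesian distance clustering likelihood after
integrating out the cluster-specific rates `λ_i` (with Gamma(μ, β) priors): the cohesion
term marginalizes to `L_i⁽¹⁾` while the medoid–medoid repulsion term is unchanged. -/
theorem bdc_linear_marginal_likelihood (N K : ℕ) (hN : 1 ≤ N)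
    (D : Fin N → Fin N → ℝ)
    (hdiag : ∀ i, D i i = 0) (hpos : ∀ i j, i ≠ j → 0 < D i j)
    (γ : Finset (Fin N)) (hγ : γ.Nonempty) (hcard : γ.card = K)
    (huniq : ∀ j, ∃! i, i ∈ γ ∧ ∀ l ∈ γ, D i j ≤ D l j)
    (δ₁ δ₂ μ β θ : ℝ)
    (hδ₁ : 0 < δ₁) (hδ₂ : 0 < δ₂) (hμ : 0 < μ) (hβ : 0 < β) (hθ : 0 < θ) :
    (∫ lam in Set.univ.pi (fun _ : {i // i ∈ γ} => Set.Ioi (0 : ℝ)),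
      (∏ i ∈ γ.attach, ∏ j ∈ (voronoiClusterF D γ i.1).erase i.1,
          (lam i ^ δ₁ / Real.Gamma δ₁) * D i.1 j ^ (δ₁ - 1) *
            Real.exp (-(lam i * D i.1 j))) *
      (∏ i ∈ γ.attach, (β ^ μ / Real.Gamma μ) * lam i ^ (μ - 1) *
          Real.exp (-(β * lam i))) *
      (∏ i ∈ γ, ∏ j ∈ γ.filter (fun j => i < j),
          (θ ^ δ₂ / Real.Gamma δ₂) * D i j ^ (δ₂ - 1) * Real.exp (-(θ * D i j))))
    =
    (∏ i ∈ γ,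
        Real.Gamma δ₁ ^ (-((((voronoiClusterF D γ i).card - 1 : ℕ) : ℝ))) *
          (Real.Gamma (μ + (((voronoiClusterF D γ i).card - 1 : ℕ) : ℝ) * δ₁) /
            Real.Gamma μ) *
          β ^ μ *
          (∏ j ∈ (voronoiClusterF D γ i).erase i, D i j) ^ (δ₁ - 1) *
          (β + ∑ j ∈ (voronoiClusterF D γ i).erase i, D i j) ^
            (-μ - δ₁ * (((voronoiClusterF D γ i).card - 1 : ℕ) : ℝ))) *
    (∏ i ∈ γ, ∏ j ∈ γ.filter (fun j => i < j),
        (θ ^ δ₂ / Real.Gamma δ₂) * D i j ^ (δ₂ - 1) * Real.exp (-(θ * D i j))) := by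
  rw [integral_mul_const]
  congr 1
  simp_rw [← Finset.prod_mul_distrib]
  rw [volume_pi, Measure.restrict_pi_pi]
  rw [← Finset.prod_attach γ]
  have h := integral_fintype_prod_eq_prod (𝕜 := ℝ)
    (μ := fun _ : {i // i ∈ γ} => (volume : Measure ℝ).restrict (Set.Ioi 0))
    (fun (i : {i // i ∈ γ}) (x : ℝ) =>
      (∏ j ∈ (voronoiClusterF D γ i.1).erase i.1, (x ^ δ₁ / Real.Gamma δ₁) *
        D i.1 j ^ (δ₁ - 1) * Real.exp (-(x * D i.1 j))) *
      ((β ^ μ / Real.Gamma μ) * x ^ (μ - 1) * Real.exp (-(β * x))))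
  rw [Finset.univ_eq_attach] at h
  refine h.trans (Finset.prod_congr rfl fun i _ => ?_)
  have hmem : i.1 ∈ voronoiClusterF D γ i.1 := by
    simp only [voronoiClusterF, Finset.mem_filter, Finset.mem_univ, true_and]
    refine ⟨i.2, fun l _ => ?_⟩
    rw [hdiag]
    by_cases hl : l = i.1
    · rw [hl, hdiag]
    · exact (hpos _ _ hl).le
  rw [← Finset.card_erase_of_mem hmem]
  exact bdc_aux _ _ (fun j hj => hpos _ _ (Finset.ne_of_mem_erase hj).symm) δ₁ μ β hδ₁ hμ hβ
end
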